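/- arXiv:2402.12588 — 2 statements merged into one kernel-verified Lean document; each statement's English description precedes it below -/
import Mathlib

section
/- Let f : A → B and g : B → A be homomorphisms of abelian groups such that f ∘ g equals multiplication by a positive integer m on B. Suppose A is the internal direct sum of a divisible subgroup D_A and a subgroup F_A with N·x = 0 for all x ∈ F_A, for some positive integer N, and suppose the (m·N)-torsion subgroup {b ∈ B : (m·N)·b = 0} of B is finite. Then B is the internal direct sum of a divisible subgroup and a finite subgroup. -/
/-!
A divisible group is an injective `ℤ`-module, so the divisible subgroup `f(D_A)` has a complement
`F_B` in `B`. Since `N • A ⊆ D_A` and `m • B ⊆ f(A)`, multiplication by `m * N` maps `B` into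
`f(D_A)`; it therefore kills `F_B`, which is thus contained in the finite `(m * N)`-torsion.
-/

/-- A subgroup is divisible if each of its elements can be divided, within the subgroup, by every
positive integer. Unlike Mathlib's `DivisibleBy`, this is a proposition and carries no choice of
quotients. -/
def IsDivisibleSubgroup {G : Type*} [AddGroup G] (D : AddSubgroup G) : Prop :=
  ∀ d ∈ D, ∀ n : ℕ, 0 < n → ∃ d' ∈ D, n • d' = d

section AddGroup

variable {G H : Type*} [AddGroup G] [AddGroup H]

theorem IsDivisibleSubgroup.map {D : AddSubgroup G} (hD : IsDivisibleSubgroup D) (f : G →+ H) :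
    IsDivisibleSubgroup (D.map f) := by
  rintro _ ⟨d, hd, rfl⟩ n hn
  obtain ⟨d', hd', rfl⟩ := hD d hd n hn
  exact ⟨f d', AddSubgroup.mem_map_of_mem f hd', (map_nsmul f n d').symm⟩

theorem mul_nsmul_mem_map {f : G →+ H} {D : AddSubgroup G} {m n : ℕ} {h : H}
    (hm : m • h ∈ f.range) (hn : ∀ a, n • a ∈ D) : (m * n) • h ∈ D.map f := by
  obtain ⟨a, ha⟩ := hm
  rw [mul_nsmul, ← ha, ← map_nsmul]
  exact AddSubgroup.mem_map_of_mem f (hn a)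

theorem nsmul_eq_zero_of_disjoint {D F : AddSubgroup G} (hDF : Disjoint D F) {n : ℕ} {x : G}
    (hx : x ∈ F) (hn : n • x ∈ D) : n • x = 0 :=
  AddSubgroup.disjoint_def.1 hDF hn (F.nsmul_mem hx n)

end AddGroup

section AddCommGroup

variable {G : Type*} [AddCommGroup G] {D F : AddSubgroup G}

theorem nsmul_mem_of_sup_eq_top (hDF : D ⊔ F = ⊤) {n : ℕ} (hF : ∀ x ∈ F, n • x = 0) (a : G) :
    n • a ∈ D := by
  obtain ⟨d, hd, x, hx, rfl⟩ := AddSubgroup.mem_sup.1 (hDF ▸ AddSubgroup.mem_top a)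
  rw [nsmul_add, hF x hx, add_zero]
  exact D.nsmul_mem hd n

namespace IsDivisibleSubgroup

theorem baer (hD : IsDivisibleSubgroup D) : Module.Baer ℤ D := by
  have surjective_nsmul {n : ℕ} (hn : n ≠ 0) : Function.Surjective fun d : D ↦ n • d := by
    rintro ⟨d, hd⟩
    obtain ⟨d', hd', h⟩ := hD d hd n (Nat.pos_of_ne_zero hn)
    exact ⟨⟨d', hd'⟩, Subtype.ext h⟩
  let : DivisibleBy D ℕ := divisibleByOfSMulRightSurj D ℕ surjective_nsmul
  let : DivisibleBy D ℤ := AddGroup.divisibleByIntOfDivisibleByNat D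
  exact Module.Baer.of_divisible D

theorem exists_isCompl (hD : IsDivisibleSubgroup D) : ∃ F : AddSubgroup G, IsCompl D F := by
  obtain ⟨r, hr⟩ := hD.baer.extension_property D.toIntSubmodule.subtype
    D.toIntSubmodule.subtype_injective LinearMap.id
  have hcompl : IsCompl D.toIntSubmodule r.ker := LinearMap.isCompl_of_proj (LinearMap.congr_fun hr)
  exact ⟨r.ker.toAddSubgroup, AddSubgroup.toIntSubmodule.isCompl_iff.2 hcompl⟩

theorem exists_finite_isCompl (hD : IsDivisibleSubgroup D) {n : ℕ} (hn : ∀ b, n • b ∈ D)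
    (htors : {b : G | n • b = 0}.Finite) :
    ∃ F : AddSubgroup G, (F : Set G).Finite ∧ IsCompl D F := by
  obtain ⟨F, hF⟩ := hD.exists_isCompl
  exact ⟨F, htors.subset fun x hx ↦ nsmul_eq_zero_of_disjoint hF.disjoint hx (hn x), hF⟩

end IsDivisibleSubgroup

end AddCommGroup

theorem direct_sum_divisible_finite_transfer_general
    {A B : Type*} [AddCommGroup A] [AddCommGroup B]
    (f : A →+ B) (m : ℕ) (hf : ∀ b : B, m • b ∈ f.range)
    (DA FA : AddSubgroup A) (hdiv : IsDivisibleSubgroup DA)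
    (N : ℕ) (hFA : ∀ x ∈ FA, N • x = 0) (hsup : DA ⊔ FA = ⊤)
    (htors : {b : B | (m * N) • b = 0}.Finite) :
    ∃ DB FB : AddSubgroup B,
      IsDivisibleSubgroup DB ∧ (FB : Set B).Finite ∧ DB ⊓ FB = ⊥ ∧ DB ⊔ FB = ⊤ := by
  have hDB : IsDivisibleSubgroup (DA.map f) := hdiv.map f
  have hmN (b : B) : (m * N) • b ∈ DA.map f :=
    mul_nsmul_mem_map (hf b) (nsmul_mem_of_sup_eq_top hsup hFA)
  obtain ⟨FB, hfin, hcompl⟩ := hDB.exists_finite_isCompl hmN htors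
  exact ⟨DA.map f, FB, hDB, hfin, hcompl.inf_eq_bot, hcompl.sup_eq_top⟩

/-- Transfer of the divisible-plus-finite decomposition along maps whose composite is
multiplication by `m`: if `A = D_A ⊕ F_A` with `D_A` divisible and `F_A` killed by `N`,
and the `(m·N)`-torsion of `B` is finite, then `B` is the internal direct sum of a
divisible subgroup and a finite subgroup. -/
theorem direct_sum_divisible_finite_transfer
    {A B : Type*} [AddCommGroup A] [AddCommGroup B]
    (f : A →+ B) (g : B →+ A) (m : ℕ) (hm : 0 < m)
    (hfg : ∀ b : B, f (g b) = m • b)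
    (DA FA : AddSubgroup A)
    (hdiv : ∀ d ∈ DA, ∀ n : ℕ, 0 < n → ∃ d' ∈ DA, n • d' = d)
    (N : ℕ) (hN : 0 < N) (hFA : ∀ x ∈ FA, N • x = 0)
    (hinf : DA ⊓ FA = ⊥) (hsup : DA ⊔ FA = ⊤)
    (htors : {b : B | (m * N) • b = 0}.Finite) :
    ∃ DB FB : AddSubgroup B,
      (∀ d ∈ DB, ∀ n : ℕ, 0 < n → ∃ d' ∈ DB, n • d' = d) ∧
      (FB : Set B).Finite ∧ DB ⊓ FB = ⊥ ∧ DB ⊔ FB = ⊤ :=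
  direct_sum_divisible_finite_transfer_general f m (fun b ↦ ⟨g b, hfg b⟩) DA FA hdiv N hFA hsup
    htors
end

section
/- Let G be an abelian group and H a subgroup of G such that m·g ∈ H for every g ∈ G, for some positive integer m. Suppose H is the internal direct sum of a divisible subgroup D and a torsion subgroup. Then for every g ∈ G there is a positive integer n with n·g ∈ D; consequently G is the internal direct sum of D and a torsion subgroup, i.e. G is the direct sum of a divisible group and a torsion group. -/
/-!
A divisible group is an injective `ℤ`-module, so the identity of `D` extends to a retraction of
`G` onto `D`, whose kernel is a complement of `D`. Every element of `G` has a positive multiple in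
`D ⊔ T`, hence also one in `D`, because a further multiple annihilates the component in `T`.
For an element of the complement, that multiple lies both in `D` and in the complement, so it
vanishes.
-/

theorem exists_isCompl_of_baer {R M : Type*} [Ring R] [AddCommGroup M] [Module R M]
    {N : Submodule R M} (hN : Module.Baer R N) : ∃ N' : Submodule R M, IsCompl N N' := by
  obtain ⟨r, hr⟩ := hN.extension_property N.subtype N.injective_subtype LinearMap.id
  exact ⟨r.ker, LinearMap.isCompl_of_proj (LinearMap.congr_fun hr)⟩

theorem baer_int_of_surjective_nsmul {A : Type*} [AddCommGroup A]
    (hA : ∀ n : ℕ, 0 < n → Function.Surjective fun a : A ↦ n • a) : Module.Baer ℤ A := by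
  let : DivisibleBy A ℕ := divisibleByOfSMulRightSurj A ℕ fun hn ↦ hA _ (Nat.pos_of_ne_zero hn)
  let : DivisibleBy A ℤ := AddGroup.divisibleByIntOfDivisibleByNat A
  exact Module.Baer.of_divisible A

section AddCommGroup

variable {G : Type*} [AddCommGroup G] {D T : AddSubgroup G}

theorem exists_isCompl_of_divisible
    (hdiv : ∀ d ∈ D, ∀ n : ℕ, 0 < n → ∃ d' ∈ D, n • d' = d) :
    ∃ T' : AddSubgroup G, IsCompl D T' := by
  have hD : Module.Baer ℤ D.toIntSubmodule := baer_int_of_surjective_nsmul fun n hn d ↦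
    let ⟨d', hd', hd'd⟩ := hdiv d d.2 n hn
    ⟨⟨d', hd'⟩, Subtype.ext hd'd⟩
  obtain ⟨N, hN⟩ := exists_isCompl_of_baer hD
  exact ⟨N.toAddSubgroup, AddSubgroup.toIntSubmodule.isCompl_iff.mpr hN⟩

theorem exists_nsmul_mem_left_of_mem_sup (htor : ∀ t ∈ T, IsOfFinAddOrder t) {g : G}
    (hg : g ∈ D ⊔ T) : ∃ n : ℕ, 0 < n ∧ n • g ∈ D := by
  obtain ⟨d, hd, t, ht, rfl⟩ := AddSubgroup.mem_sup.mp hg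
  obtain ⟨n, hn, hnt⟩ := (htor t ht).exists_nsmul_eq_zero
  refine ⟨n, hn, ?_⟩
  rw [nsmul_add, hnt, add_zero]
  exact D.nsmul_mem hd n

end AddCommGroup

theorem nsmul_eq_zero_of_disjoint_s11 {G : Type*} [AddGroup G] {D T : AddSubgroup G}
    (h : Disjoint D T) {n : ℕ} {t : G} (ht : t ∈ T) (hnt : n • t ∈ D) : n • t = 0 :=
  AddSubgroup.disjoint_def.mp h hnt (T.nsmul_mem ht n)

theorem direct_sum_divisible_torsion_of_bounded_index_subgroup_general
    {G : Type*} [AddCommGroup G] (D T : AddSubgroup G)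
    (hG : ∀ g : G, ∃ m : ℕ, 0 < m ∧ m • g ∈ D ⊔ T)
    (hdiv : ∀ d ∈ D, ∀ n : ℕ, 0 < n → ∃ d' ∈ D, n • d' = d)
    (htor : ∀ t ∈ T, ∃ n : ℕ, 0 < n ∧ n • t = 0) :
    (∀ g : G, ∃ n : ℕ, 0 < n ∧ n • g ∈ D) ∧
      ∃ T' : AddSubgroup G, (∀ t ∈ T', ∃ n : ℕ, 0 < n ∧ n • t = 0) ∧
        D ⊓ T' = ⊥ ∧ D ⊔ T' = ⊤ := by
  have hmul (g : G) : ∃ n : ℕ, 0 < n ∧ n • g ∈ D := by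
    obtain ⟨m, hm, hmg⟩ := hG g
    obtain ⟨n, hn, hnmg⟩ := exists_nsmul_mem_left_of_mem_sup
      (fun t ht ↦ isOfFinAddOrder_iff_nsmul_eq_zero.mpr (htor t ht)) hmg
    exact ⟨n * m, Nat.mul_pos hn hm, by rwa [mul_nsmul']⟩
  obtain ⟨T', hT'⟩ := exists_isCompl_of_divisible hdiv
  refine ⟨hmul, T', fun t ht ↦ ?_, hT'.inf_eq_bot, hT'.sup_eq_top⟩
  obtain ⟨n, hn, hnt⟩ := hmul t
  exact ⟨n, hn, nsmul_eq_zero_of_disjoint_s11 hT'.disjoint ht hnt⟩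

/-- If `H` is a subgroup of `G` with `m·g ∈ H` for all `g` (some `m > 0`), and `H` is
the internal direct sum of a divisible subgroup `D` and a torsion subgroup `T`, then
every element of `G` has a multiple in `D`, and `G` is the internal direct sum of `D`
and a torsion subgroup. -/
theorem direct_sum_divisible_torsion_of_bounded_index_subgroup
    {G : Type*} [AddCommGroup G] (H : AddSubgroup G)
    (m : ℕ) (hm : 0 < m) (hH : ∀ g : G, m • g ∈ H)
    (D T : AddSubgroup G)
    (hdiv : ∀ d ∈ D, ∀ n : ℕ, 0 < n → ∃ d' ∈ D, n • d' = d)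
    (htor : ∀ t ∈ T, ∃ n : ℕ, 0 < n ∧ n • t = 0)
    (hinf : D ⊓ T = ⊥) (hsup : D ⊔ T = H) :
    (∀ g : G, ∃ n : ℕ, 0 < n ∧ n • g ∈ D) ∧
      ∃ T' : AddSubgroup G, (∀ t ∈ T', ∃ n : ℕ, 0 < n ∧ n • t = 0) ∧
        D ⊓ T' = ⊥ ∧ D ⊔ T' = ⊤ := by
  subst hsup
  exact direct_sum_divisible_torsion_of_bounded_index_subgroup_general D T
    (fun g ↦ ⟨m, hm, hH g⟩) hdiv htor
end
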